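/- arXiv:1704.08226 — 5 statements merged into one kernel-verified Lean document; each statement's English description precedes it below -/
import Mathlib

section
/- Let V be a finite-dimensional complex inner product space with dim_ℂ V = n, with Hermitian inner product h, real part g = Re h, and J multiplication by i. Let π ⊆ V be a totally real subspace of real dimension n with projections π_L, π_J, and let e₁, …, eₙ be a basis of π that is orthonormal with respect to g. Then for every ℂ-linear map B : V → V, the complex trace of B satisfies tr_ℂ B = Σᵢ ( g(π_L(B eᵢ), eᵢ) − i · g(J π_J(B eᵢ), eᵢ) ). -/
/-- Multiplication by the imaginary unit `i`, as an `ℝ`-linear endomorphism of a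
complex vector space `V`. -/
noncomputable def Jmap (V : Type*) [AddCommGroup V] [Module ℂ V] : V →ₗ[ℝ] V :=
  (Complex.I • (LinearMap.id : V →ₗ[ℂ] V)).restrictScalars ℝ

/-- Let `π` be a totally real `n`-plane in an `n`-dimensional complex inner product space
`(V, h)`, with projections `π_L, π_J` onto `π` and `Jπ`, and let `e₁, …, eₙ` be a basis of
`π` orthonormal for `g = Re h`.  Then for any `ℂ`-linear `B : V → V`,
`tr_ℂ B = Σᵢ ( g(π_L(B eᵢ), eᵢ) − i·g(J π_J(B eᵢ), eᵢ) )`. -/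
theorem stmt4 {V : Type*} [NormedAddCommGroup V] [InnerProductSpace ℂ V]
    [FiniteDimensional ℂ V] {n : ℕ} (hn : Module.finrank ℂ V = n)
    (π : Submodule ℝ V) (hπn : Module.finrank ℝ π = n)
    (hTR : π ⊓ π.map (Jmap V) = ⊥)
    (πL πJ : V →ₗ[ℝ] V)
    (hπL : ∀ v, πL v ∈ π) (hπJ : ∀ v, πJ v ∈ π.map (Jmap V))
    (hsum : ∀ v, πL v + πJ v = v)
    (e : Fin n → V) (he : ∀ i, e i ∈ π)
    (hspan : Submodule.span ℝ (Set.range e) = π)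
    (hON : ∀ i j, (inner ℂ (e i) (e j) : ℂ).re = if i = j then 1 else 0)
    (B : V →ₗ[ℂ] V) :
    LinearMap.trace ℂ V B =
      ∑ i, (((inner ℂ (πL (B (e i))) (e i) : ℂ).re : ℂ)
        - Complex.I * ((inner ℂ (Complex.I • πJ (B (e i))) (e i) : ℂ).re : ℂ)) := by
  have hJ : ∀ w : V, Jmap V w = Complex.I • w := fun w => rfl
  have hreal : ∀ w ∈ π, w ∈ Submodule.span ℂ (Set.range e) := by
    intro w hw
    rw [← hspan] at hw
    exact Submodule.span_le_restrictScalars ℝ ℂ _ hw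
  have htop : ⊤ ≤ Submodule.span ℂ (Set.range e) := by
    intro v _
    rw [← hsum v]
    refine Submodule.add_mem _ (hreal _ (hπL v)) ?_
    obtain ⟨w, hw, hwv⟩ := hπJ v
    rw [← hwv, hJ]
    exact Submodule.smul_mem _ _ (hreal _ hw)
  let b : Module.Basis (Fin n) ℂ V :=
    basisOfTopLeSpanOfCardEqFinrank e htop (by simp [hn])
  have hb : ∀ i, b i = e i := fun i => by simp [b]
  have key : ∀ w ∈ π, ∀ i, b.repr w i = ((inner ℂ w (e i) : ℂ).re : ℂ) := by
    intro w hw i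
    rw [← hspan] at hw
    induction hw using Submodule.span_induction with
    | mem x hx =>
      obtain ⟨j, rfl⟩ := hx
      rw [hON, ← hb j, b.repr_self, Finsupp.single_apply]
      split_ifs <;> simp
    | zero => simp
    | add x y _ _ hx hy => simp [hx, hy, inner_add_left]
    | smul r x _ hx =>
      have : r • x = (r : ℂ) • x := (Complex.coe_smul r x).symm
      rw [this, map_smul, Finsupp.smul_apply, hx, inner_smul_left]
      simp
  rw [LinearMap.trace_eq_matrix_trace ℂ b, Matrix.trace]
  refine Finset.sum_congr rfl fun i _ => ?_
  rw [Matrix.diag_apply, LinearMap.toMatrix_apply, hb]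
  obtain ⟨w, hw, hwv⟩ := hπJ (B (e i))
  rw [hJ] at hwv
  conv_lhs => rw [← hsum (B (e i))]
  rw [← hwv, map_add, Finsupp.add_apply, key _ (hπL _), map_smul, Finsupp.smul_apply, key _ hw,
    smul_smul, Complex.I_mul_I, neg_one_smul, inner_neg_left]
  simp
end

section
/- Let V be a finite-dimensional complex inner product space with dim_ℂ V = n, g = Re h, and J multiplication by i. Let π ⊆ V be a totally real subspace of real dimension n with projections π_L, π_J, and let e₁, …, eₙ be a g-orthonormal basis of π. If B : V → V is a ℂ-linear map whose complex trace tr_ℂ B is a real number, then Σᵢ g(J π_J(B eᵢ), eᵢ) = 0. -/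
/-- Let `π` be a totally real `n`-plane in an `n`-dimensional complex inner product space
`(V, h)`, with projections `π_L, π_J`, and `e₁, …, eₙ` a `g`-orthonormal basis of `π`,
where `g = Re h`.  If the complex trace of a `ℂ`-linear map `B : V → V` is real, then
`Σᵢ g(J π_J(B eᵢ), eᵢ) = 0`. -/
theorem stmt5 {V : Type*} [NormedAddCommGroup V] [InnerProductSpace ℂ V]
    [FiniteDimensional ℂ V] {n : ℕ} (hn : Module.finrank ℂ V = n)
    (π : Submodule ℝ V) (hπn : Module.finrank ℝ π = n)
    (hTR : π ⊓ π.map (Jmap V) = ⊥)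
    (πL πJ : V →ₗ[ℝ] V)
    (hπL : ∀ v, πL v ∈ π) (hπJ : ∀ v, πJ v ∈ π.map (Jmap V))
    (hsum : ∀ v, πL v + πJ v = v)
    (e : Fin n → V) (he : ∀ i, e i ∈ π)
    (hspan : Submodule.span ℝ (Set.range e) = π)
    (hON : ∀ i j, (inner ℂ (e i) (e j) : ℂ).re = if i = j then 1 else 0)
    (B : V →ₗ[ℂ] V) (htr : (LinearMap.trace ℂ V B).im = 0) :
    ∑ i, (inner ℂ (Complex.I • πJ (B (e i))) (e i) : ℂ).re = 0 := by
  classical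
  have hmem : ∀ x ∈ π, ∃ c : Fin n → ℝ, ∑ j, (c j : ℂ) • e j = x := by
    intro x hx
    rw [← hspan, Submodule.mem_span_range_iff_exists_fun] at hx
    obtain ⟨c, hc⟩ := hx
    exact ⟨c, by simpa only [Complex.coe_smul] using hc⟩
  have hdec : ∀ v, ∃ a c : Fin n → ℝ, v = ∑ j, ((a j : ℂ) + Complex.I * (c j : ℂ)) • e j ∧
      πJ v = Complex.I • ∑ j, (c j : ℂ) • e j := by
    intro v
    obtain ⟨a, ha⟩ := hmem _ (hπL v)
    obtain ⟨w, hw, hwv⟩ := hπJ v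
    obtain ⟨c, hc⟩ := hmem w hw
    have hJ : πJ v = Complex.I • ∑ j, (c j : ℂ) • e j := by
      rw [hc, ← hwv]; rfl
    refine ⟨a, c, ?_, hJ⟩
    conv_lhs => rw [← hsum v, hJ, ← ha]
    simp only [add_smul, mul_smul, Finset.sum_add_distrib, Finset.smul_sum]
  have htop : ⊤ ≤ Submodule.span ℂ (Set.range e) := by
    intro v _
    obtain ⟨a, c, hv, -⟩ := hdec v
    rw [Submodule.mem_span_range_iff_exists_fun]
    exact ⟨_, hv.symm⟩
  have hli : LinearIndependent ℂ e :=
    linearIndependent_of_top_le_span_of_card_eq_finrank htop (by simp [hn])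
  let b := Module.Basis.mk hli htop
  have hb : ∀ i, b i = e i := fun i => Module.Basis.mk_apply hli htop i
  have key : ∀ v i, (inner ℂ (Complex.I • πJ v) (e i) : ℂ).re = -(b.repr v i).im := by
    intro v i
    obtain ⟨a, c, hv, hJ⟩ := hdec v
    have h1 : b.repr v i = (a i : ℂ) + Complex.I * (c i : ℂ) := by
      rw [hv]
      simp only [← hb]
      rw [b.repr_sum_self]
    rw [h1, hJ, smul_smul, Complex.I_mul_I, neg_one_smul, inner_neg_left, sum_inner]
    simp only [inner_smul_left]
    simp [hON]
  simp only [key]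
  rw [LinearMap.trace_eq_matrix_trace ℂ b, Matrix.trace, Complex.im_sum] at htr
  simp only [Matrix.diag_apply, LinearMap.toMatrix_apply, hb] at htr
  rw [Finset.sum_neg_distrib, htr, neg_zero]
end

section
/- Let A : ℝ → Matrix (Fin n) (Fin n) ℂ be a curve of complex n×n matrices that is differentiable at t₀, with A(t₀) invertible, and suppose that for all t in a neighbourhood of t₀ the determinant det(A(t)) is a real number. Then the complex number tr( A(t₀)⁻¹ · A′(t₀) ) is real, where A′(t₀) denotes the derivative of A at t₀. -/
theorem jacobi_aux {n : ℕ} (A : ℝ → Matrix (Fin n) (Fin n) ℂ)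
    (A' : Matrix (Fin n) (Fin n) ℂ) (t₀ : ℝ)
    (hderiv : ∀ i j, HasDerivAt (fun t => A t i j) (A' i j) t₀) :
    HasDerivAt (fun t => (A t).det) (((A t₀).adjugate * A').trace) t₀ := by
  have h1 : ((A t₀).adjugate * A').trace
      = ∑ i, ((A t₀).updateCol i (fun k => A' k i)).det := by
    unfold Matrix.trace
    refine Finset.sum_congr rfl fun i _ => ?_
    rw [← Matrix.cramer_apply, Matrix.cramer_eq_adjugate_mulVec]
    rfl
  have h2 : ∀ i, ((A t₀).updateCol i (fun k => A' k i)).det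
      = ∑ σ : Equiv.Perm (Fin n), ((Equiv.Perm.sign σ : ℤ) : ℂ) *
        ((∏ j ∈ Finset.univ.erase i, A t₀ (σ j) j) • A' (σ i) i) := by
    intro i
    rw [Matrix.det_apply']
    refine Finset.sum_congr rfl fun σ _ => ?_
    rw [← Finset.prod_erase_mul _ _ (Finset.mem_univ i)]
    congr 1
    rw [smul_eq_mul, Matrix.updateCol_self]
    congr 1
    refine Finset.prod_congr rfl fun j hj => ?_
    rw [Matrix.updateCol_ne (Finset.ne_of_mem_erase hj)]
  rw [h1]
  simp_rw [h2]
  rw [Finset.sum_comm]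
  simp_rw [Matrix.det_apply', ← Finset.mul_sum]
  refine HasDerivAt.fun_sum fun σ _ => ?_
  exact (HasDerivAt.fun_finsetProd fun i _ => hderiv (σ i) i).const_mul _


/-- If `A(t)` is a curve of complex `n×n` matrices, differentiable at `t₀` with derivative
`A'`, such that `A(t₀)` is invertible and `det A(t)` is real for all `t` near `t₀`, then
`tr(A(t₀)⁻¹ · A')` is a real number. -/
theorem stmt6 {n : ℕ} (A : ℝ → Matrix (Fin n) (Fin n) ℂ)
    (A' : Matrix (Fin n) (Fin n) ℂ) (t₀ : ℝ)
    (hderiv : ∀ i j, HasDerivAt (fun t => A t i j) (A' i j) t₀)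
    (hinv : IsUnit (A t₀).det)
    (hre : ∀ᶠ t in nhds t₀, ((A t).det).im = 0) :
    (((A t₀)⁻¹ * A').trace).im = 0 := by
  have h := jacobi_aux A A' t₀ hderiv
  have h3 : HasDerivAt (fun t => ((A t).det).im) (((A t₀).adjugate * A').trace).im t₀ :=
    Complex.imCLM.hasFDerivAt.comp_hasDerivAt t₀ h
  have h4 : HasDerivAt (fun t => ((A t).det).im) 0 t₀ :=
    (hasDerivAt_const t₀ (0 : ℝ)).congr_of_eventuallyEq hre
  have h5 := h3.unique h4
  have h6 : ((A t₀).det).im = 0 := hre.self_of_nhds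
  rw [Matrix.inv_def, Matrix.smul_mul, Matrix.trace_smul, smul_eq_mul, Ring.inverse_eq_inv',
    Complex.mul_im, h5, Complex.inv_im, h6]
  simp
end

section
/- Let A be a real antisymmetric n×n matrix (Aᵀ = −A) and consider the complex matrix H = Iₙ − i·A, where Iₙ is the identity and i the imaginary unit. Then: (1) H is Hermitian and det H is a real number; (2) if H is positive definite, then 0 < det H ≤ 1, with det H = 1 if and only if A = 0. -/
open Matrix
open scoped ComplexOrder

/-- The complex matrix `H = Iₙ − i·A` associated to a real matrix `A`. -/
noncomputable def hermOf {n : ℕ} (A : Matrix (Fin n) (Fin n) ℝ) :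
    Matrix (Fin n) (Fin n) ℂ :=
  1 - Complex.I • A.map Complex.ofReal

/-- For a real antisymmetric matrix `A`, the matrix `H = Iₙ − i·A` is Hermitian with real
determinant; if moreover `H` is positive definite then `0 < det H ≤ 1`, with equality
`det H = 1` if and only if `A = 0`. -/
theorem stmt7 {n : ℕ} (A : Matrix (Fin n) (Fin n) ℝ) (hA : Aᵀ = -A) :
    ((hermOf A).IsHermitian ∧ ((hermOf A).det).im = 0) ∧
      ((hermOf A).PosDef →
        0 < ((hermOf A).det).re ∧ ((hermOf A).det).re ≤ 1 ∧
          ((hermOf A).det = 1 ↔ A = 0)) := by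
  have hH : (hermOf A).IsHermitian := by
    ext i j
    have h := congrFun (congrFun hA i) j
    simp only [Matrix.transpose_apply, Matrix.neg_apply] at h
    simp [hermOf, Matrix.one_apply, h, eq_comm, sub_eq_add_neg]
  have hdet : (hermOf A).det = ((∏ i, hH.eigenvalues i : ℝ) : ℂ) := by
    rw [hH.det_eq_prod_eigenvalues]
    push_cast
    rfl
  have hdiag : ∀ i, A i i = 0 := by
    intro i
    have h := congrFun (congrFun hA i) i
    simp only [Matrix.transpose_apply, Matrix.neg_apply] at h
    linarith
  have htr : ∑ i, hH.eigenvalues i = (n : ℝ) := by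
    have h1 : (hermOf A).trace = (n : ℂ) := by
      simp [Matrix.trace, hermOf, hdiag]
    have h2 := hH.trace_eq_sum_eigenvalues
    rw [h1] at h2
    have h3 : ((n : ℝ) : ℂ) = ((∑ i, hH.eigenvalues i : ℝ) : ℂ) := by
      push_cast
      exact h2
    exact (Complex.ofReal_injective h3).symm
  have hsum : ∑ i, (hH.eigenvalues i - 1) = 0 := by
    simp [Finset.sum_sub_distrib, htr]
  refine ⟨⟨hH, by rw [hdet]; exact Complex.ofReal_im _⟩, fun hP => ?_⟩
  have hpos : ∀ i, 0 < hH.eigenvalues i := hH.posDef_iff_eigenvalues_pos.mp hP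
  have hprod : 0 < ∏ i, hH.eigenvalues i := Finset.prod_pos fun i _ => hpos i
  have hlog : Real.log (∏ i, hH.eigenvalues i) = ∑ i, Real.log (hH.eigenvalues i) :=
    Real.log_prod fun i _ => (hpos i).ne'
  have hle : ∀ i ∈ Finset.univ, Real.log (hH.eigenvalues i) ≤ hH.eigenvalues i - 1 :=
    fun i _ => Real.log_le_sub_one_of_pos (hpos i)
  refine ⟨by rw [hdet]; exact hprod, ?_, ?_, ?_⟩
  · rw [hdet, Complex.ofReal_re, ← Real.log_nonpos_iff hprod.le, hlog, ← hsum]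
    exact Finset.sum_le_sum hle
  · intro h1
    rw [hdet] at h1
    have h1' : ∏ i, hH.eigenvalues i = 1 := by exact_mod_cast h1
    rw [h1', Real.log_one, ← hsum] at hlog
    have h2 := (Finset.sum_eq_sum_iff_of_le hle).mp hlog.symm
    have h3 : ∀ i, hH.eigenvalues i = 1 := by
      intro i
      by_contra hne
      exact (Real.log_lt_sub_one_of_pos (hpos i) hne).ne (h2 i (Finset.mem_univ i))
    have h4 : hermOf A = 1 := by
      have h5 := hH.spectral_theorem
      have h6 : (diagonal (RCLike.ofReal ∘ hH.eigenvalues) : Matrix (Fin n) (Fin n) ℂ) = 1 := by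
        rw [← Matrix.diagonal_one]
        congr 1
        funext i
        simp [h3]
      rw [h6, map_one] at h5
      exact h5
    ext i j
    have h7 := congrFun (congrFun h4 i) j
    simpa [hermOf] using h7
  · rintro rfl
    have : hermOf (0 : Matrix (Fin n) (Fin n) ℝ) = 1 := by
      ext i j
      simp [hermOf]
    rw [this, Matrix.det_one]
end

section
/- Let V be a finite-dimensional complex inner product space with dim_ℂ V = n, Hermitian inner product h, g = Re h and ω = −Im h, and let Ω be a normalized complex volume form on V. Then for any vectors e₁, …, eₙ ∈ V that are orthonormal with respect to the real inner product g, one has |Ω(e₁, …, eₙ)| ≤ 1, with equality if and only if ω(eᵢ, eⱼ) = 0 for all i, j, i.e. if and only if the real span of e₁, …, eₙ is a Lagrangian subspace. -/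
/-- If `Ω` is a normalized complex volume form on an `n`-dimensional complex inner product
space `(V, h)` and `e₁, …, eₙ` are orthonormal for the real inner product `g = Re h`, then
`|Ω(e₁,…,eₙ)| ≤ 1`, with equality if and only if `ω(eᵢ,eⱼ) = 0` for all `i, j`
(where `ω = −Im h`), i.e. iff the real span of the `eᵢ` is Lagrangian. -/
theorem stmt10 {V : Type*} [NormedAddCommGroup V] [InnerProductSpace ℂ V]
    [FiniteDimensional ℂ V] {n : ℕ} (hn : Module.finrank ℂ V = n)
    (Ω : AlternatingMap ℂ V ℂ (Fin n))
    (u : Fin n → V) (hu : Orthonormal ℂ u)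
    (hspan : Submodule.span ℂ (Set.range u) = ⊤)
    (hΩ : ‖Ω u‖ = 1)
    (e : Fin n → V)
    (hON : ∀ i j, (inner ℂ (e i) (e j) : ℂ).re = if i = j then 1 else 0) :
    ‖Ω e‖ ≤ 1 ∧
      (‖Ω e‖ = 1 ↔ ∀ i j, (inner ℂ (e i) (e j) : ℂ).im = 0) := by
  have hone : ∀ i, ‖e i‖ = 1 := by
    intro i
    have h := hON i i
    have h2 : (inner ℂ (e i) (e i) : ℂ).re = ‖e i‖ ^ 2 := by
      rw [inner_self_eq_norm_sq_to_K]
      norm_cast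
    rw [h2, if_pos rfl] at h
    exact (pow_eq_one_iff_of_nonneg (norm_nonneg _) two_ne_zero).1 h
  -- any two orthonormal bases have the same value of `‖Ω‖`
  let U : OrthonormalBasis (Fin n) ℂ V := OrthonormalBasis.mk hu hspan.ge
  have hU : (U : Fin n → V) = u := OrthonormalBasis.coe_mk hu hspan.ge
  have key : ∀ b : OrthonormalBasis (Fin n) ℂ V, ‖Ω b‖ = 1 := by
    intro b
    have h := congrArg (fun f => f b) (AlternatingMap.eq_smul_basis_det U.toBasis Ω)
    simp only [AlternatingMap.smul_apply, OrthonormalBasis.coe_toBasis, hU] at h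
    rw [h, smul_eq_mul, norm_mul, hΩ, one_mul]
    exact U.det_to_matrix_orthonormalBasis b
  have hcard : Module.finrank ℂ V = Fintype.card (Fin n) := by simpa using hn
  let b := InnerProductSpace.gramSchmidtOrthonormalBasis hcard e
  have hprod : ‖Ω e‖ = ∏ i, ‖(inner ℂ (b i) (e i) : ℂ)‖ := by
    have h := congrArg (fun f => f e) (AlternatingMap.eq_smul_basis_det b.toBasis Ω)
    simp only [AlternatingMap.smul_apply, OrthonormalBasis.coe_toBasis] at h
    rw [h, smul_eq_mul, norm_mul, key b, one_mul,
      InnerProductSpace.gramSchmidtOrthonormalBasis_det hcard e, norm_prod]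
  have hle : ∀ i, ‖(inner ℂ (b i) (e i) : ℂ)‖ ≤ 1 := by
    intro i
    have h := norm_inner_le_norm (𝕜 := ℂ) (b i) (e i)
    rwa [hone, b.norm_eq_one, one_mul] at h
  refine ⟨?_, ?_, ?_⟩
  · rw [hprod]
    exact Finset.prod_le_one (fun i _ => norm_nonneg _) (fun i _ => hle i)
  · intro h
    rw [hprod] at h
    have hc : ∀ i, ∃ r : ℂ, e i = r • b i := by
      intro i
      have h1 : ‖(inner ℂ (b i) (e i) : ℂ)‖ = 1 := by
        refine le_antisymm (hle i) ?_
        rw [← h, ← Finset.mul_prod_erase _ _ (Finset.mem_univ i)]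
        exact mul_le_of_le_one_right (norm_nonneg _)
          (Finset.prod_le_one (fun i _ => norm_nonneg _) (fun i _ => hle i))
      have hb0 : b i ≠ 0 := by
        rw [← norm_ne_zero_iff, b.norm_eq_one]; exact one_ne_zero
      have he0 : e i ≠ 0 := by
        rw [← norm_ne_zero_iff, hone]; exact one_ne_zero
      obtain ⟨r, -, hr⟩ := (norm_inner_eq_norm_iff (𝕜 := ℂ) hb0 he0).1
        (by rw [h1, hone, b.norm_eq_one, one_mul])
      exact ⟨r, hr⟩
    intro i j
    by_cases hij : i = j
    · subst hij
      exact inner_self_im (𝕜 := ℂ) (e i)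
    · obtain ⟨r, hr⟩ := hc i
      obtain ⟨s, hs⟩ := hc j
      rw [hr, hs, inner_smul_left, inner_smul_right, b.orthonormal.2 hij]
      simp
  · intro h
    have heo : Orthonormal ℂ e := by
      refine ⟨hone, fun i j hij => ?_⟩
      apply Complex.ext
      · rw [hON, if_neg hij]; rfl
      · rw [h]; rfl
    have hE : ⊤ ≤ Submodule.span ℂ (Set.range e) :=
      (heo.linearIndependent.span_eq_top_of_card_eq_finrank' hcard.symm).ge
    have := key (OrthonormalBasis.mk heo hE)
    rwa [OrthonormalBasis.coe_mk] at this
end
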